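/- With U, V_1, …, V_L as in the context, for all natural numbers β, β_1, …, β_L the following hold: (i) E[U^β · ∏_{ℓ=1}^L V_ℓ^{β_ℓ}] ≥ 0; (ii) E[U² · U^β · ∏_{ℓ=1}^L V_ℓ^{β_ℓ}] ≥ E[U^β · ∏_{ℓ=1}^L V_ℓ^{β_ℓ}]; and (iii) for every 1 ≤ j ≤ L, E[V_j² · U^β · ∏_{ℓ=1}^L V_ℓ^{β_ℓ}] ≥ E[U^β · ∏_{ℓ=1}^L V_ℓ^{β_ℓ}]. -/

import Mathlib

/-!
Expanding `V_ℓ = ρ²·U + √(1-ρ⁴)·W_ℓ`, the integrand `F = U^β ∏ V_ℓ^{β_ℓ}` is a combination, with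
nonnegative coefficients, of monomials in the independent coordinates `U, W_1, …, W_L`; such
functions form a subsemiring (`posCone`). By independence, the integral of a monomial is a product
of one-dimensional Gaussian moments `m_n`, which satisfy `0 ≤ m_n ≤ m_{n+2}`. Hence every
`F` in `posCone` has a nonnegative integral, which can only grow when `F` is multiplied by the
square of a coordinate (`posCone_spec`).

This gives the claims (i) and (ii). For (iii), write `c = ρ²` and `s = √(1-ρ⁴)`, so that
`V_j² F = c² U² F + 2cs U W_j F + s² W_j² F`. The first and third terms integrate to at least
`c² ∫ F` and `s² ∫ F`, the middle one to something nonnegative, and `c² + s² = 1`.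
-/

open MeasureTheory ProbabilityTheory

/-- The `(L+1)`-fold product of standard Gaussian measures; coordinate `0` is `U`
and coordinate `ℓ.succ` is `W_ℓ`. -/
noncomputable def gaussSpace (L : ℕ) : Measure (Fin (L + 1) → ℝ) :=
  Measure.pi fun _ => gaussianReal 0 1

/-- `V_ℓ = ρ²·U + √(1-ρ⁴)·W_ℓ` as a function of the Gaussian sample `g`. -/
noncomputable def Vg (L : ℕ) (ρ : ℝ) (ℓ : Fin L) (g : Fin (L + 1) → ℝ) : ℝ :=
  ρ ^ 2 * g 0 + Real.sqrt (1 - ρ ^ 4) * g ℓ.succ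

lemma integrable_pow_gaussian (n : ℕ) : Integrable (fun x : ℝ => x ^ n) (gaussianReal 0 1) := by
  rcases Nat.eq_zero_or_pos n with rfl | hn
  · simp
  have h := (memLp_id_gaussianReal' (μ := 0) (v := 1) (n : ENNReal) (by simp)).integrable_norm_pow
    (by omega)
  refine h.mono' (by fun_prop) (Filter.Eventually.of_forall fun x => ?_)
  simp

lemma moment_odd (n : ℕ) (hn : Odd n) : ∫ x, x ^ n ∂(gaussianReal 0 1) = 0 := by
  have h : ∫ x, x ^ n ∂((gaussianReal 0 1).map (fun x => -x))
      = ∫ x, (-x) ^ n ∂(gaussianReal 0 1) :=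
    integral_map (by fun_prop) (by fun_prop)
  rw [gaussianReal_map_neg, neg_zero] at h
  simp only [hn.neg_pow, integral_neg] at h
  linarith

lemma moment_two : ∫ x, x ^ 2 ∂(gaussianReal 0 1) = 1 := by
  have h := variance_fun_id_gaussianReal (μ := 0) (v := 1)
  rw [variance_of_integral_eq_zero (by fun_prop) (by simp)] at h
  simpa using h

lemma moment_nonneg (n : ℕ) : 0 ≤ ∫ x, x ^ n ∂(gaussianReal 0 1) := by
  rcases Nat.even_or_odd n with h | h
  · exact integral_nonneg fun x => h.pow_nonneg x
  · rw [moment_odd n h]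

/-- Odd moments vanish. For even `n`, integrate `(x² - 1)(xⁿ - 1) ≥ 0` and use `m_2 = 1`. -/
lemma moment_mono (n : ℕ) :
    ∫ x, x ^ n ∂(gaussianReal 0 1) ≤ ∫ x, x ^ (n + 2) ∂(gaussianReal 0 1) := by
  rcases Nat.even_or_odd n with h | h
  · obtain ⟨k, rfl⟩ := h
    have key : 0 ≤ ∫ x, ((x ^ (k + k + 2) - x ^ (k + k)) - (x ^ 2 - 1)) ∂(gaussianReal 0 1) := by
      refine integral_nonneg fun x => ?_
      have hx : (x ^ (k + k + 2) - x ^ (k + k)) - (x ^ 2 - 1)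
          = (x ^ 2 - 1) * ((x ^ 2) ^ k - 1) := by ring
      rw [hx]
      rcases le_total (x ^ 2) 1 with h1 | h1
      · exact mul_nonneg_of_nonpos_of_nonpos (by linarith)
          (by linarith [pow_le_one₀ (n := k) (sq_nonneg x) h1])
      · exact mul_nonneg (by linarith) (by linarith [one_le_pow₀ (n := k) h1])
    have i := integrable_pow_gaussian
    have i₁ : Integrable (fun x : ℝ => x ^ (k + k + 2) - x ^ (k + k)) (gaussianReal 0 1) :=
      (i _).sub (i _)
    have i₂ : Integrable (fun x : ℝ => x ^ 2 - 1) (gaussianReal 0 1) :=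
      (i 2).sub (integrable_const _)
    rw [integral_sub i₁ i₂, integral_sub (i _) (i _), integral_sub (i 2) (integrable_const _),
      moment_two] at key
    simp at key
    linarith
  · rw [moment_odd n h, moment_odd (n + 2) (by grind)]

/-- The multiplicative monoid of functions `g ↦ c · ∏ gᵢ^{aᵢ}` with `c ≥ 0`. -/
def posMonomials (N : ℕ) : Submonoid ((Fin N → ℝ) → ℝ) where
  carrier := {f | ∃ c : ℝ, 0 ≤ c ∧ ∃ a : Fin N → ℕ, f = fun g => c * ∏ i, g i ^ a i}
  one_mem' := ⟨1, zero_le_one, 0, by ext; simp⟩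
  mul_mem' := by
    rintro _ _ ⟨c, hc, a, rfl⟩ ⟨d, hd, b, rfl⟩
    refine ⟨c * d, mul_nonneg hc hd, a + b, ?_⟩
    ext g
    simp only [Pi.mul_apply, Pi.add_apply, pow_add, Finset.prod_mul_distrib]
    ring

/-- The semiring of polynomial functions on `ℝ^N` with nonnegative coefficients. -/
def posCone (N : ℕ) : Subsemiring ((Fin N → ℝ) → ℝ) := (posMonomials N).subsemiringClosure

lemma const_mem_posCone {N : ℕ} {c : ℝ} (hc : 0 ≤ c) : (fun _ => c) ∈ posCone N :=
  (Submonoid.subsemiringClosure_mem _).2 <| AddSubmonoid.subset_closure ⟨c, hc, 0, by simp⟩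

lemma coord_mem_posCone {N : ℕ} (i : Fin N) : (fun g => g i) ∈ posCone N := by
  refine (Submonoid.subsemiringClosure_mem _).2 <|
    AddSubmonoid.subset_closure ⟨1, zero_le_one, Pi.single i 1, ?_⟩
  ext g
  rw [Finset.prod_eq_single i] <;> simp +contextual

lemma integrable_monomial {N : ℕ} (a : Fin N → ℕ) :
    Integrable (fun g : Fin N → ℝ => ∏ i, g i ^ a i)
      (Measure.pi fun _ => gaussianReal 0 1) :=
  Integrable.fintype_prod (f := fun i x => x ^ a i) fun i => integrable_pow_gaussian (a i)

lemma integral_monomial {N : ℕ} (a : Fin N → ℕ) :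
    ∫ g : Fin N → ℝ, ∏ i, g i ^ a i ∂(Measure.pi fun _ => gaussianReal 0 1)
      = ∏ i, ∫ x, x ^ a i ∂(gaussianReal 0 1) :=
  integral_fintype_prod_eq_prod (fun i x => x ^ a i)

lemma sq_mul_monomial {N : ℕ} (a : Fin N → ℕ) (i : Fin N) (g : Fin N → ℝ) :
    g i ^ 2 * ∏ k, g k ^ a k = ∏ k, g k ^ (a + Pi.single i 2 : Fin N → ℕ) k := by
  simp only [Pi.add_apply, pow_add, Finset.prod_mul_distrib]
  rw [mul_comm, Finset.prod_eq_single (f := fun k => g k ^ (Pi.single i 2 : Fin N → ℕ) k) i]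
  · simp
  · intro b _ hb
    simp [hb]
  · simp

lemma integral_monomial_mono {N : ℕ} (a : Fin N → ℕ) (i : Fin N) :
    ∫ g : Fin N → ℝ, ∏ k, g k ^ a k ∂(Measure.pi fun _ => gaussianReal 0 1)
      ≤ ∫ g : Fin N → ℝ, g i ^ 2 * ∏ k, g k ^ a k ∂(Measure.pi fun _ => gaussianReal 0 1) := by
  simp_rw [sq_mul_monomial, integral_monomial]
  refine Finset.prod_le_prod (fun k _ => moment_nonneg _) fun k _ => ?_
  by_cases hk : k = i
  · subst hk
    simpa using moment_mono (a k)
  · simp [hk]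

lemma posCone_spec {N : ℕ} {f : (Fin N → ℝ) → ℝ} (hf : f ∈ posCone N) :
    Integrable f (Measure.pi fun _ => gaussianReal 0 1) ∧
    0 ≤ ∫ g, f g ∂(Measure.pi fun _ => gaussianReal 0 1) ∧
    ∀ i, Integrable (fun g => g i ^ 2 * f g) (Measure.pi fun _ => gaussianReal 0 1) ∧
      ∫ g, f g ∂(Measure.pi fun _ => gaussianReal 0 1)
        ≤ ∫ g, g i ^ 2 * f g ∂(Measure.pi fun _ => gaussianReal 0 1) := by
  induction (Submonoid.subsemiringClosure_mem _).1 hf using AddSubmonoid.closure_induction with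
  | mem f h =>
    obtain ⟨c, hc, a, rfl⟩ := h
    refine ⟨(integrable_monomial a).const_mul c, ?_, fun i => ?_⟩
    · rw [integral_const_mul, integral_monomial]
      exact mul_nonneg hc (Finset.prod_nonneg fun k _ => moment_nonneg _)
    · simp_rw [mul_left_comm _ c, integral_const_mul]
      refine ⟨Integrable.const_mul ?_ c,
        mul_le_mul_of_nonneg_left (integral_monomial_mono a i) hc⟩
      simp_rw [sq_mul_monomial]
      exact integrable_monomial _
  | zero => simp
  | add f₁ f₂ h₁ h₂ ih₁ ih₂ =>
    obtain ⟨I₁, p₁, m₁⟩ := ih₁ ((Submonoid.subsemiringClosure_mem _).2 h₁)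
    obtain ⟨I₂, p₂, m₂⟩ := ih₂ ((Submonoid.subsemiringClosure_mem _).2 h₂)
    refine ⟨I₁.add I₂, ?_, fun i => ?_⟩
    · simp only [Pi.add_apply]
      rw [integral_add I₁ I₂]
      exact add_nonneg p₁ p₂
    · simp only [Pi.add_apply, mul_add]
      refine ⟨(m₁ i).1.add (m₂ i).1, ?_⟩
      rw [integral_add I₁ I₂, integral_add (m₁ i).1 (m₂ i).1]
      exact add_le_add (m₁ i).2 (m₂ i).2

lemma Vg_mem_posCone (L : ℕ) (ρ : ℝ) (ℓ : Fin L) : Vg L ρ ℓ ∈ posCone (L + 1) :=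
  add_mem (mul_mem (const_mem_posCone (sq_nonneg ρ)) (coord_mem_posCone 0))
    (mul_mem (const_mem_posCone (Real.sqrt_nonneg _)) (coord_mem_posCone ℓ.succ))

lemma integrand_mem_posCone (L : ℕ) (ρ : ℝ) (β : ℕ) (βv : Fin L → ℕ) :
    (fun g => (g 0) ^ β * ∏ ℓ : Fin L, Vg L ρ ℓ g ^ βv ℓ) ∈ posCone (L + 1) := by
  have h := mul_mem (pow_mem (coord_mem_posCone (0 : Fin (L + 1))) β)
    (prod_mem (t := Finset.univ) fun ℓ _ => pow_mem (Vg_mem_posCone L ρ ℓ) (βv ℓ))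
  convert h using 1
  ext g
  simp

lemma integral_le_integral_Vg_sq_mul {L : ℕ} {ρ : ℝ} (hρ : ρ ∈ Set.Ioc (0 : ℝ) 1) (j : Fin L)
    {F : (Fin (L + 1) → ℝ) → ℝ} (hF : F ∈ posCone (L + 1)) :
    ∫ g, F g ∂(gaussSpace L) ≤ ∫ g, Vg L ρ j g ^ 2 * F g ∂(gaussSpace L) := by
  obtain ⟨-, -, hm⟩ := posCone_spec hF
  obtain ⟨hUWI, hUW0, -⟩ := posCone_spec
    (mul_mem (mul_mem (coord_mem_posCone 0) (coord_mem_posCone j.succ)) hF)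
  change Integrable (fun g => g 0 * g j.succ * F g) (gaussSpace L) at hUWI
  change 0 ≤ ∫ g, g 0 * g j.succ * F g ∂(gaussSpace L) at hUW0
  change ∀ i, Integrable (fun g => g i ^ 2 * F g) (gaussSpace L) ∧
    ∫ g, F g ∂(gaussSpace L) ≤ ∫ g, g i ^ 2 * F g ∂(gaussSpace L) at hm
  set c := ρ ^ 2 with hc
  set s := Real.sqrt (1 - ρ ^ 4) with hs
  have hc0 : 0 ≤ c := sq_nonneg ρ
  have hs0 : 0 ≤ s := Real.sqrt_nonneg _
  have hcs : c ^ 2 + s ^ 2 = 1 := by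
    rw [hs, Real.sq_sqrt (by linarith [pow_le_one₀ (n := 4) hρ.1.le hρ.2]), hc]
    ring
  have hexp : ∀ g, Vg L ρ j g ^ 2 * F g
      = (c ^ 2 * (g 0 ^ 2 * F g) + (2 * c * s) * (g 0 * g j.succ * F g))
        + s ^ 2 * (g j.succ ^ 2 * F g) := by
    intro g
    simp only [Vg, ← hc, ← hs]
    ring
  simp_rw [hexp]
  have I1 := (hm 0).1.const_mul (c ^ 2)
  have I2 := hUWI.const_mul (2 * c * s)
  have I3 := (hm j.succ).1.const_mul (s ^ 2)
  rw [integral_add (by exact I1.add I2) I3, integral_add I1 I2, integral_const_mul,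
    integral_const_mul, integral_const_mul]
  have e1 := mul_le_mul_of_nonneg_left (hm 0).2 (sq_nonneg c)
  have e2 := mul_nonneg (by positivity : 0 ≤ 2 * c * s) hUW0
  have e3 := mul_le_mul_of_nonneg_left (hm j.succ).2 (sq_nonneg s)
  calc ∫ g, F g ∂(gaussSpace L)
      = c ^ 2 * ∫ g, F g ∂(gaussSpace L) + s ^ 2 * ∫ g, F g ∂(gaussSpace L) := by
        rw [← add_mul, hcs, one_mul]
    _ ≤ _ := add_le_add ((le_add_of_nonneg_right e2).trans' e1) e3

/-- the Gaussian joint moments `E[U^β ∏_ℓ V_ℓ^{β_ℓ}]` are nonnegative,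
and multiplying the integrand by `U²` or by any `V_j²` can only increase the expectation. -/
theorem gaussian_moment_monotonicity
    (L : ℕ) (hL : 1 ≤ L) (ρ : ℝ) (hρ : ρ ∈ Set.Ioc (0 : ℝ) 1)
    (β : ℕ) (βv : Fin L → ℕ) :
    (0 ≤ ∫ g, (g 0) ^ β * ∏ ℓ : Fin L, Vg L ρ ℓ g ^ βv ℓ ∂(gaussSpace L)) ∧
    ((∫ g, (g 0) ^ β * ∏ ℓ : Fin L, Vg L ρ ℓ g ^ βv ℓ ∂(gaussSpace L)) ≤
      ∫ g, (g 0) ^ 2 * ((g 0) ^ β * ∏ ℓ : Fin L, Vg L ρ ℓ g ^ βv ℓ) ∂(gaussSpace L)) ∧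
    (∀ j : Fin L,
      (∫ g, (g 0) ^ β * ∏ ℓ : Fin L, Vg L ρ ℓ g ^ βv ℓ ∂(gaussSpace L)) ≤
        ∫ g, Vg L ρ j g ^ 2 * ((g 0) ^ β * ∏ ℓ : Fin L, Vg L ρ ℓ g ^ βv ℓ)
          ∂(gaussSpace L)) := by
  have hF := integrand_mem_posCone L ρ β βv
  obtain ⟨-, h0, hm⟩ := posCone_spec hF
  exact ⟨h0, (hm 0).2, fun j => integral_le_integral_Vg_sq_mul hρ j hF⟩
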